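/- arXiv:1003.2170 — 8 statements merged into one kernel-verified Lean document; each statement's English description precedes it below -/
import Mathlib

section
/- The double integral over the unit square ∫₀¹ ∫₀¹ 1/(1 − x·y) dx dy equals ∑_{n=1}^∞ 1/n². -/
open MeasureTheory in
lemma aux_int (a : ℕ → ℝ) (ha : ∀ n, 0 ≤ a n) (hs : Summable fun n : ℕ => a n / ((n:ℝ) + 1)) :
    (∫ x in Set.Ioo (0:ℝ) 1, ∑' n : ℕ, a n * x ^ n) = ∑' n : ℕ, a n / ((n:ℝ) + 1) := by
  have hI : ∀ n : ℕ, (∫ x in Set.Ioo (0:ℝ) 1, a n * x ^ n) = a n / ((n:ℝ) + 1) := by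
    intro n
    rw [← integral_Ioc_eq_integral_Ioo, ← intervalIntegral.integral_of_le zero_le_one,
      intervalIntegral.integral_const_mul, integral_pow]
    simp [div_eq_mul_inv]
  have hN : ∀ n : ℕ, (∫ x in Set.Ioo (0:ℝ) 1, ‖a n * x ^ n‖) = a n / ((n:ℝ) + 1) := by
    intro n
    rw [← hI n]
    refine setIntegral_congr_fun measurableSet_Ioo fun x hx => ?_
    exact Real.norm_of_nonneg (mul_nonneg (ha n) (pow_nonneg hx.1.le n))
  have h := hasSum_integral_of_summable_integral_norm
    (μ := volume.restrict (Set.Ioo (0:ℝ) 1)) (F := fun (n : ℕ) (x : ℝ) => a n * x ^ n)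
    (fun n => by
      have hc : Continuous fun x : ℝ => a n * x ^ n := by fun_prop
      exact (hc.integrableOn_Icc (a := 0) (b := 1)).mono_set Set.Ioo_subset_Icc_self)
    (by simpa only [hN] using hs)
  simp only [hI] at h
  exact h.tsum_eq.symm

/-- ∫₀¹ ∫₀¹ 1/(1 − x·y) dx dy = ∑_{n=1}^∞ 1/n². -/
theorem beukers_integral_eq_tsum :
    (∫ y in (0:ℝ)..1, ∫ x in (0:ℝ)..1, 1 / (1 - x * y)) =
      ∑' n : ℕ, (1 : ℝ) / ((n : ℝ) + 1) ^ 2 := by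
  have hin : ∀ y ∈ Set.Ioo (0:ℝ) 1, (∫ x in (0:ℝ)..1, 1 / (1 - x * y)) =
      ∑' n : ℕ, (1 / ((n:ℝ) + 1)) * y ^ n := by
    intro y hy
    rw [intervalIntegral.integral_of_le zero_le_one, MeasureTheory.integral_Ioc_eq_integral_Ioo]
    have hs : Summable fun n : ℕ => y ^ n / ((n:ℝ) + 1) := by
      refine Summable.of_nonneg_of_le (fun n => ?_) (fun n => ?_)
        (summable_geometric_of_lt_one hy.1.le hy.2)
      · exact div_nonneg (pow_nonneg hy.1.le n) (by positivity)
      · exact div_le_self (pow_nonneg hy.1.le n) (by simp)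
    have h := aux_int (fun n => y ^ n) (fun n => pow_nonneg hy.1.le n) hs
    calc _ = ∫ x in Set.Ioo (0:ℝ) 1, ∑' n : ℕ, y ^ n * x ^ n := by
          refine MeasureTheory.setIntegral_congr_fun measurableSet_Ioo fun x hx => ?_
          have h1 : x * y < 1 := by nlinarith [hx.1, hx.2, hy.1, hy.2]
          have h0 : 0 ≤ x * y := mul_nonneg hx.1.le hy.1.le
          simp only [← mul_pow, mul_comm y x]
          rw [tsum_geometric_of_lt_one h0 h1, one_div]
      _ = _ := h
      _ = _ := by
          congr 1; ext n; ring
  rw [intervalIntegral.integral_of_le zero_le_one, MeasureTheory.integral_Ioc_eq_integral_Ioo,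
    MeasureTheory.setIntegral_congr_fun measurableSet_Ioo hin]
  have he : ∀ n : ℕ, 1 / ((n:ℝ) + 1) / ((n:ℝ) + 1) = 1 / ((n:ℝ) + 1) ^ 2 := by
    intro n; rw [div_div, sq]
  rw [aux_int (fun n => 1 / ((n:ℝ) + 1)) (fun n => by positivity)]
  · simp only [he]
  · simp only [he]
    have := (summable_nat_add_iff 1).2 (Real.summable_one_div_nat_pow.2 (one_lt_two))
    simpa using this
end

section
/- The double integral over the unit square ∫₀¹ ∫₀¹ 1/(1 − x²·y²) dx dy equals ∑_{n=0}^∞ 1/(2n+1)². -/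
open MeasureTheory Set in
lemma aux_int_s2 (n : ℕ) (c : ℝ) :
    ∫ x in Ioo (0:ℝ) 1, c * x ^ (2 * n) = c / (2 * (n:ℝ) + 1) := by
  rw [← integral_Ioc_eq_integral_Ioo, ← intervalIntegral.integral_of_le zero_le_one,
    intervalIntegral.integral_const_mul, integral_pow]
  simp [div_eq_mul_inv]

open MeasureTheory Set in
lemma aux_integrable (n : ℕ) (c : ℝ) :
    Integrable (fun x : ℝ => c * x ^ (2 * n)) (volume.restrict (Ioo (0:ℝ) 1)) := by
  have h : ContinuousOn (fun x : ℝ => c * x ^ (2 * n)) (Icc 0 1) := by fun_prop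
  exact (h.integrableOn_Icc).mono_set Ioo_subset_Icc_self

open MeasureTheory Set in
lemma aux_hasSum (c : ℕ → ℝ) (hc : ∀ n, 0 ≤ c n)
    (hs : Summable fun n : ℕ => c n / (2 * (n:ℝ) + 1)) :
    HasSum (fun n : ℕ => c n / (2 * (n:ℝ) + 1))
      (∫ x in Ioo (0:ℝ) 1, ∑' n, c n * x ^ (2 * n)) := by
  have h := hasSum_integral_of_summable_integral_norm
    (μ := volume.restrict (Ioo (0:ℝ) 1)) (F := fun (n : ℕ) (x : ℝ) => c n * x ^ (2 * n))
    (fun n => aux_integrable n (c n)) ?_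
  · simpa only [aux_int_s2] using h
  · convert hs using 2 with n
    rw [← aux_int_s2]
    refine integral_congr_ae (Filter.Eventually.of_forall fun x => ?_)
    have : 0 ≤ c n * x ^ (2 * n) := mul_nonneg (hc n) (by rw [pow_mul]; positivity)
    simp only [Real.norm_of_nonneg this]

open MeasureTheory Set in
lemma aux_inner (y : ℝ) (hy : y ∈ Ioo (0:ℝ) 1) :
    ∫ x in Ioo (0:ℝ) 1, 1 / (1 - x ^ 2 * y ^ 2) =
      ∑' n : ℕ, (1 / (2 * (n:ℝ) + 1)) * y ^ (2 * n) := by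
  have hy2 : y ^ 2 < 1 := by nlinarith [hy.1, hy.2]
  have h := aux_hasSum (fun n => y ^ (2 * n)) (fun n => pow_nonneg hy.1.le _) ?_
  · have e : ∀ n : ℕ, (1 / (2 * (n:ℝ) + 1)) * y ^ (2 * n) = y ^ (2 * n) / (2 * (n:ℝ) + 1) :=
      fun n => by ring
    simp only [e]
    rw [h.tsum_eq]
    refine setIntegral_congr_fun measurableSet_Ioo fun x hx => ?_
    have hx2 : x ^ 2 < 1 := by nlinarith [hx.1, hx.2]
    have hlt : x ^ 2 * y ^ 2 < 1 := by nlinarith [sq_nonneg x, sq_nonneg y]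
    have := tsum_geometric_of_lt_one (r := x ^ 2 * y ^ 2) (by positivity) hlt
    simp only [one_div]
    rw [← this]
    refine tsum_congr fun n => ?_
    rw [mul_pow, pow_mul, pow_mul, mul_comm]
  · refine Summable.of_nonneg_of_le (fun n => div_nonneg (pow_nonneg hy.1.le _) (by positivity))
      (fun n => ?_) (summable_geometric_of_lt_one (sq_nonneg y) hy2)
    rw [← pow_mul]
    exact div_le_self (pow_nonneg hy.1.le _) (by linarith [Nat.cast_nonneg (α := ℝ) n])

open MeasureTheory Set in
/-- ∫₀¹ ∫₀¹ 1/(1 − x²·y²) dx dy = ∑_{n=0}^∞ 1/(2n+1)². -/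
theorem integral_eq_odd_tsum :
    (∫ y in (0:ℝ)..1, ∫ x in (0:ℝ)..1, 1 / (1 - x ^ 2 * y ^ 2)) =
      ∑' n : ℕ, (1 : ℝ) / (2 * (n : ℝ) + 1) ^ 2 := by
  simp only [intervalIntegral.integral_of_le (zero_le_one (α := ℝ)),
    integral_Ioc_eq_integral_Ioo]
  rw [setIntegral_congr_fun measurableSet_Ioo aux_inner]
  have e : ∀ n : ℕ, 1 / (2 * (n:ℝ) + 1) / (2 * (n:ℝ) + 1) = 1 / (2 * (n : ℝ) + 1) ^ 2 :=
    fun n => by rw [div_div, sq]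
  have h := aux_hasSum (fun n => 1 / (2 * (n:ℝ) + 1)) (fun n => by positivity) ?_
  · simp only [e] at h
    exact h.tsum_eq.symm
  · simp only [e]
    have := (summable_nat_add_iff 1).2 (Real.summable_one_div_nat_pow.2 one_lt_two)
    refine Summable.of_nonneg_of_le (fun n => by positivity) (fun n => ?_) this
    push_cast
    gcongr
    linarith [Nat.cast_nonneg (α := ℝ) n]
end

section
/- The double integral over the unit square ∫₀¹ ∫₀¹ 1/(1 − x²·y²) dx dy equals π²/8. -/
open MeasureTheory in
lemma aux_int_s4 (c : ℕ → ℝ) (hc : ∀ n, 0 ≤ c n) (g : ℝ → ℝ)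
    (hg : ∀ x ∈ Set.Ioo (0:ℝ) 1, HasSum (fun n => c n * x ^ (2 * n)) (g x)) (S : ℝ)
    (hS : HasSum (fun n => c n * (1 / (2 * n + 1))) S) : (∫ x in (0:ℝ)..1, g x) = S := by
  have hI : ∀ n : ℕ, (∫ x in Set.Ioo (0:ℝ) 1, c n * x ^ (2 * n)) = c n * (1 / (2 * n + 1)) := by
    intro n
    rw [← integral_Ioc_eq_integral_Ioo, ← intervalIntegral.integral_of_le zero_le_one,
      intervalIntegral.integral_const_mul, integral_pow]
    simp
  have hN : ∀ n : ℕ, (∫ x in Set.Ioo (0:ℝ) 1, ‖c n * x ^ (2 * n)‖) = c n * (1 / (2 * n + 1)) := by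
    intro n
    rw [← hI n]
    refine integral_congr_ae (Filter.Eventually.of_forall fun x => ?_)
    have : 0 ≤ c n * x ^ (2 * n) := mul_nonneg (hc n) (by rw [pow_mul]; positivity)
    simp only [Real.norm_of_nonneg this]
  have h := hasSum_integral_of_summable_integral_norm
    (μ := volume.restrict (Set.Ioo (0:ℝ) 1)) (F := fun (n : ℕ) (x : ℝ) => c n * x ^ (2 * n))
    (fun n => by
      have : IntegrableOn (fun x : ℝ => c n * x ^ (2 * n)) (Set.Icc 0 1) :=
        (by fun_prop : Continuous fun x : ℝ => c n * x ^ (2 * n)).integrableOn_Icc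
      exact this.mono_set Set.Ioo_subset_Icc_self)
    (by simp only [hN]; exact hS.summable)
  simp only [hI] at h
  rw [intervalIntegral.integral_of_le zero_le_one, integral_Ioc_eq_integral_Ioo, hS.unique h]
  refine setIntegral_congr_fun measurableSet_Ioo fun x hx => ?_
  exact (hg x hx).tsum_eq.symm

lemma aux_sum : HasSum (fun n : ℕ => (1 / (2 * n + 1) : ℝ) * (1 / (2 * n + 1))) (Real.pi ^ 2 / 8) := by
  have h := hasSum_zeta_two
  have he : HasSum (fun n : ℕ => (1:ℝ) / ((2 * n : ℕ) : ℝ) ^ 2) (1 / 4 * (Real.pi ^ 2 / 6)) := by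
    refine (h.mul_left (1 / 4)).congr_fun ?_ |> id
    intro n
    push_cast
    ring
  have ho : Summable (fun n : ℕ => (1:ℝ) / ((2 * n + 1 : ℕ) : ℝ) ^ 2) :=
    h.summable.comp_injective (i := fun n : ℕ => 2 * n + 1) (fun a b hab => by simpa using hab)
  have hh := HasSum.even_add_odd (f := fun n : ℕ => (1:ℝ) / (n : ℝ) ^ 2) he ho.hasSum
  have e := hh.unique h
  have e2 : (∑' n : ℕ, (1:ℝ) / ((2 * n + 1 : ℕ) : ℝ) ^ 2) = Real.pi ^ 2 / 8 := by linarith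
  rw [← e2]
  convert ho.hasSum using 2 with n
  push_cast
  rw [← one_div_pow, sq]

/-- ∫₀¹ ∫₀¹ 1/(1 − x²·y²) dx dy = π²/8. -/
theorem integral_eq_pi_sq_div_eight :
    (∫ y in (0:ℝ)..1, ∫ x in (0:ℝ)..1, 1 / (1 - x ^ 2 * y ^ 2)) = Real.pi ^ 2 / 8 := by
  refine aux_int_s4 (fun n => 1 / (2 * n + 1)) (fun n => by positivity) _ ?_ _ aux_sum
  intro y hy
  have hy2 : y ^ 2 < 1 := by nlinarith [hy.1, hy.2]
  have hs : Summable (fun n : ℕ => y ^ (2 * n) * (1 / (2 * n + 1) : ℝ)) := by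
    refine Summable.of_nonneg_of_le (fun n => ?_) (fun n => ?_)
      (summable_geometric_of_lt_one (sq_nonneg y) hy2)
    · rw [pow_mul]; positivity
    · rw [pow_mul]
      refine mul_le_of_le_one_right (by positivity) ?_
      rw [div_le_one (by positivity)]
      have : (0:ℝ) ≤ n := n.cast_nonneg
      linarith
  have key := aux_int_s4 (fun n => y ^ (2 * n)) (fun n => by rw [pow_mul]; positivity)
    (fun x => 1 / (1 - x ^ 2 * y ^ 2)) ?_ _ hs.hasSum
  · rw [key]
    convert hs.hasSum using 2 with n
    ring
  · intro x hx
    have hx2 : x ^ 2 < 1 := by nlinarith [hx.1, hx.2]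
    have := hasSum_geometric_of_lt_one (r := x ^ 2 * y ^ 2) (by positivity)
      (by nlinarith [sq_nonneg x, sq_nonneg y])
    rw [one_div]
    convert this using 2 with n
    rw [mul_pow, ← pow_mul, ← pow_mul, mul_comm]
end

section
/- The improper integral ∫₀^∞ [arsinh(cosh u) − u] du equals π²/16. -/
open Real Filter Topology in
lemma aux_summ : Summable (fun k : ℕ => 1 / (2 * (k:ℝ) + 1) ^ 2) := by
  have h := (hasSum_zeta_two.summable).comp_injective
    (i := fun k : ℕ => 2 * k + 1) (fun a b h => by simpa using h)
  refine h.congr (fun k => ?_)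
  simp

open Real Filter Topology in
lemma aux_val : ∑' k : ℕ, 1 / (2 * (k:ℝ) + 1) ^ 2 = π ^ 2 / 8 := by
  have h := hasSum_zeta_two
  have he : HasSum (fun k : ℕ => 1 / ((2 * k : ℕ) : ℝ) ^ 2) (1 / 4 * (π ^ 2 / 6)) := by
    have h4 := h.mul_left (1/4 : ℝ)
    have hfun : (fun k : ℕ => 1 / ((2 * k : ℕ) : ℝ) ^ 2)
        = fun k : ℕ => (1/4 : ℝ) * (1 / (k : ℝ) ^ 2) := by
      funext k
      rw [Nat.cast_mul, mul_pow, one_div_mul_one_div]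
      norm_num
    rw [hfun]
    exact h4
  have ho : HasSum (fun k : ℕ => 1 / ((2 * k + 1 : ℕ) : ℝ) ^ 2)
      (∑' k : ℕ, 1 / (2 * (k:ℝ) + 1) ^ 2) := by
    have := aux_summ.hasSum
    simpa using this
  have := (HasSum.even_add_odd (f := fun n : ℕ => 1 / (n : ℝ) ^ 2) he ho).unique h
  linarith

noncomputable def auxC (s : ℝ) : ℝ :=
  ∑' k : ℕ, Real.exp (-(2 * (k:ℝ) + 1) * s) / (2 * (k:ℝ) + 1) ^ 2

lemma aux_bd (k : ℕ) (s : ℝ) (hs : 0 ≤ s) :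
    ‖Real.exp (-(2 * (k:ℝ) + 1) * s) / (2 * (k:ℝ) + 1) ^ 2‖ ≤ 1 / (2 * (k:ℝ) + 1) ^ 2 := by
  rw [Real.norm_of_nonneg (by positivity)]
  gcongr
  rw [Real.exp_le_one_iff]
  have : 0 ≤ (2 * (k:ℝ) + 1) * s := by positivity
  linarith

open Real Filter Topology in
lemma auxC_zero {f : ℝ → ℝ} (h0 : ∀ u, 0 ≤ f u) (hf : Tendsto f atTop (𝓝 0)) :
    Tendsto (fun u => auxC (f u)) atTop (𝓝 (π ^ 2 / 8)) := by
  rw [← aux_val]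
  refine tendsto_tsum_of_dominated_convergence aux_summ ?_
    (Eventually.of_forall fun u k => aux_bd k _ (h0 u))
  intro k
  have : Tendsto (fun u => Real.exp (-(2 * (k:ℝ) + 1) * f u) / (2 * (k:ℝ) + 1) ^ 2) atTop
      (𝓝 (Real.exp (-(2 * (k:ℝ) + 1) * 0) / (2 * (k:ℝ) + 1) ^ 2)) :=
    ((hf.const_mul _).rexp).div_const _
  simpa using this

open Real Filter Topology in
lemma auxC_top {f : ℝ → ℝ} (h0 : ∀ u, 0 ≤ f u) (hf : Tendsto f atTop atTop) :
    Tendsto (fun u => auxC (f u)) atTop (𝓝 0) := by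
  have h : Tendsto (fun u => auxC (f u)) atTop (𝓝 (∑' k : ℕ, (0:ℝ))) := by
    refine tendsto_tsum_of_dominated_convergence aux_summ ?_
      (Eventually.of_forall fun u k => aux_bd k _ (h0 u))
    intro k
    have h1 : Tendsto (fun u => -(2 * (k:ℝ) + 1) * f u) atTop atBot :=
      hf.const_mul_atTop_of_neg (by have : (0:ℝ) ≤ k := by positivity
                                    linarith)
    simpa using (tendsto_exp_atBot.comp h1).div_const ((2 * (k:ℝ) + 1) ^ 2)
  simpa using h

open Real Filter Topology in
lemma auxC_deriv (s : ℝ) (hs : 0 < s) :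
    HasDerivAt auxC (-(1/2) * (log (1 + exp (-s)) - log (1 - exp (-s)))) s := by
  have hx1 : exp (-s) < 1 := by simpa using hs
  have hx0 := exp_pos (-s)
  have hser := (hasSum_log_sub_log_of_abs_lt_one (x := exp (-s))
    (by rw [abs_of_pos hx0]; exact hx1)).mul_left (-(1/2))
  have key : HasDerivAt auxC (∑' k : ℕ, -(exp (-(2 * (k:ℝ) + 1) * s) / (2 * (k:ℝ) + 1))) s := by
    have hu : Summable (fun k : ℕ => exp (-(s/2)) ^ k) :=
      summable_geometric_of_lt_one (exp_pos _).le (by rw [exp_lt_one_iff]; linarith)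
    have hmem : s ∈ Set.Ioi (s/2) := Set.mem_Ioi.2 (by linarith)
    refine hasDerivAt_tsum_of_isPreconnected (t := Set.Ioi (s/2))
      (g := fun (k : ℕ) (s : ℝ) => Real.exp (-(2 * (k:ℝ) + 1) * s) / (2 * (k:ℝ) + 1) ^ 2)
      (g' := fun (k : ℕ) (s : ℝ) => -(exp (-(2 * (k:ℝ) + 1) * s) / (2 * (k:ℝ) + 1))) (y₀ := s) hu isOpen_Ioi
      isPreconnected_Ioi ?_ ?_ hmem ?_ hmem
    · intro k y hy
      have hk : (2 * (k:ℝ) + 1) ≠ 0 := by positivity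
      have := (((hasDerivAt_id y).const_mul (-(2 * (k:ℝ) + 1))).exp).div_const ((2 * (k:ℝ) + 1)^2)
      refine this.congr_deriv ?_
      simp only [id]
      field_simp
    · intro k y hy
      have hy' : s/2 < y := hy
      rw [norm_neg, Real.norm_of_nonneg (by positivity), ← exp_nat_mul]
      have hk : (0:ℝ) ≤ k := by positivity
      refine (div_le_self (exp_pos _).le (by linarith)).trans ?_
      rw [exp_le_exp]
      nlinarith
    · exact Summable.of_norm_bounded aux_summ (fun k => aux_bd k s hs.le)
  refine key.congr_deriv ?_
  rw [← hser.tsum_eq]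
  refine tsum_congr (fun k => ?_)
  rw [← exp_nat_mul]
  have hk : (2 * (k:ℝ) + 1) ≠ 0 := by positivity
  have : ((2 * k + 1 : ℕ) : ℝ) * -s = -(2 * (k:ℝ) + 1) * s := by push_cast; ring
  rw [this]
  field_simp

lemma aux_lt (u : ℝ) : u < Real.arsinh (Real.cosh u) := by
  rw [← Real.sinh_lt_sinh, Real.sinh_arsinh]
  exact Real.sinh_lt_cosh u

lemma aux_eq (u v : ℝ) (h : Real.sinh v = Real.cosh u) (huv : u < v) :
    Real.log (1 + Real.exp (-(v - u))) - Real.log (1 - Real.exp (-(v - u))) = v + u := by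
  have h1 : Real.exp (-(v-u)) < 1 := by rw [Real.exp_lt_one_iff]; linarith
  have h2 : 1 + Real.exp (-(v-u)) = Real.exp (v + u) * (1 - Real.exp (-(v-u))) := by
    rw [Real.sinh_eq, Real.cosh_eq] at h
    have e1 : Real.exp (-(v-u)) = Real.exp (-v) * Real.exp u := by
      rw [← Real.exp_add]; ring_nf
    have e2 : Real.exp (v+u) = Real.exp v * Real.exp u := Real.exp_add _ _
    have e3 : Real.exp v * Real.exp (-v) = 1 := by rw [← Real.exp_add]; simp
    have e4 : Real.exp u * Real.exp (-u) = 1 := by rw [← Real.exp_add]; simp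
    rw [e1, e2]
    have h' : Real.exp v - Real.exp u = Real.exp (-u) + Real.exp (-v) := by linarith
    linear_combination (-Real.exp u) * h' - e4 + (Real.exp u)^2 * e3
  rw [h2, Real.log_mul (Real.exp_pos _).ne' (by linarith), Real.log_exp]
  ring

open Real Filter Topology in
/-- ∫₀^∞ [arsinh(cosh u) − u] du = π²/16. -/
lemma aux_main :
    (∫ u in Set.Ioi (0:ℝ), (Real.arsinh (Real.cosh u) - u)) = Real.pi ^ 2 / 16 := by
  set v : ℝ → ℝ := fun u => arsinh (cosh u) with hv
  have hlt : ∀ u, u < v u := aux_lt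
  have hlt' : ∀ u, -u < v u := fun u => by simpa [hv] using aux_lt (-u)
  have hder : ∀ u, ∃ v', HasDerivAt v v' u := fun u => ⟨_, (hasDerivAt_cosh u).arsinh⟩
  have hD : ∀ u ∈ Set.Ici (0:ℝ), HasDerivAt
      (fun u => 1/2 * (u * (v u - u)) + 1/2 * (auxC (v u - u) - auxC (v u + u))) (v u - u) u := by
    intro u _
    obtain ⟨v', h⟩ := hder u
    have hm : HasDerivAt (fun u => v u - u) (v' - 1) u := h.sub (hasDerivAt_id' u)
    have hp : HasDerivAt (fun u => v u + u) (v' + 1) u := h.add (hasDerivAt_id' u)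
    have c1 := (auxC_deriv (v u - u) (by linarith [hlt u])).comp (h := fun u => v u - u) u hm
    have c2 := (auxC_deriv (v u + u) (by linarith [hlt' u])).comp (h := fun u => v u + u) u hp
    have e1 := aux_eq u (v u) (sinh_arsinh _) (hlt u)
    have e2 := aux_eq (-u) (v u) (by rw [cosh_neg]; exact sinh_arsinh _) (hlt' u)
    rw [sub_neg_eq_add] at e2
    rw [e1] at c1
    rw [e2] at c2
    have := (((hasDerivAt_id' u).mul hm).const_mul (1/2)).add ((c1.sub c2).const_mul (1/2))
    refine this.congr_deriv ?_
    ring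
  have hb : ∀ u, v u - u ≤ 2 * exp (-u) * exp (-u) := by
    intro u
    have h : sinh (v u) = cosh u := sinh_arsinh _
    rw [sinh_eq, cosh_eq] at h
    have h1 : exp (-(v u)) ≤ exp (-u) := by rw [exp_le_exp]; linarith [hlt u]
    have h2 := add_one_le_exp (v u - u)
    have h3 : exp (v u - u) = exp (v u) * exp (-u) := by rw [← exp_add]; ring_nf
    have e4 : exp u * exp (-u) = 1 := by rw [← exp_add]; simp
    have := exp_pos (-u)
    nlinarith
  have ht : Tendsto (fun u : ℝ => exp (-u)) atTop (𝓝 0) := tendsto_exp_neg_atTop_nhds_zero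
  have t1 : Tendsto (fun u => v u - u) atTop (𝓝 0) := by
    have : Tendsto (fun u : ℝ => 2 * exp (-u) * exp (-u)) atTop (𝓝 0) := by
      simpa using (ht.const_mul 2).mul ht
    exact squeeze_zero (fun u => by linarith [hlt u]) hb this
  have t2 : Tendsto (fun u => u * (v u - u)) atTop (𝓝 0) := by
    have : Tendsto (fun u : ℝ => 2 * exp (-u)) atTop (𝓝 0) := by
      simpa using (ht.const_mul 2)
    refine squeeze_zero' ?_ ?_ this
    · filter_upwards [eventually_ge_atTop 0] with u hu
      exact mul_nonneg hu (by linarith [hlt u])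
    · filter_upwards [eventually_ge_atTop 0] with u hu
      have e4 : exp u * exp (-u) = 1 := by rw [← exp_add]; simp
      have h1 : u ≤ exp u := by linarith [add_one_le_exp u]
      calc u * (v u - u) ≤ exp u * (2 * exp (-u) * exp (-u)) :=
            mul_le_mul h1 (hb u) (by linarith [hlt u]) (exp_pos _).le
        _ = 2 * exp (-u) := by linear_combination 2 * exp (-u) * e4
  have t3 : Tendsto (fun u => v u + u) atTop atTop := by
    refine tendsto_atTop_mono' _ ?_ tendsto_id
    filter_upwards [eventually_ge_atTop 0] with u hu
    simp only [id]
    linarith [hlt u]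
  have T := (t2.const_mul (1/2)).add (((auxC_zero (fun u => by linarith [hlt u]) t1).sub
    (auxC_top (fun u => by linarith [hlt' u]) t3)).const_mul (1/2))
  have := MeasureTheory.integral_Ioi_of_hasDerivAt_of_nonneg' hD
    (fun u _ => by linarith [hlt u]) T
  rw [this]
  simp
  ring

/-- ∫₀^∞ [arsinh(cosh u) − u] du = π²/16. -/
theorem integral_arsinh_cosh_sub_id :
    (∫ u in Set.Ioi (0:ℝ), (Real.arsinh (Real.cosh u) - u)) = Real.pi ^ 2 / 16 := by
  exact aux_main
end

section
/- With α = ln(1+√2), the improper integral ∫_α^∞ [u − arcosh(sinh u)] du equals π²/16 − (1/2)·ln²(1+√2). -/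
/-- The inverse hyperbolic cosine on [1, ∞): arcosh x = ln (x + √(x² − 1)). -/
noncomputable def arcosh (x : ℝ) : ℝ := Real.log (x + Real.sqrt (x ^ 2 - 1))

noncomputable def chi (x : ℝ) : ℝ := ∑' k : ℕ, x ^ (2 * k + 1) / (2 * (k : ℝ) + 1) ^ 2

lemma chi_summable_one : Summable (fun k : ℕ => 1 / (2 * (k : ℝ) + 1) ^ 2) := by
  have h := hasSum_zeta_two.summable.comp_injective
    (i := fun k : ℕ => 2 * k + 1) (fun a b h => by simpa using h)
  refine h.congr ?_
  intro k
  simp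

lemma chi_one : chi 1 = Real.pi ^ 2 / 8 := by
  have h2 : HasSum (fun k : ℕ => 1 / ((2 * k : ℕ) : ℝ) ^ 2) (Real.pi ^ 2 / 24) := by
    have := hasSum_zeta_two.mul_left (1 / 4 : ℝ)
    have e : (1 / 4 : ℝ) * (Real.pi ^ 2 / 6) = Real.pi ^ 2 / 24 := by ring
    rw [e] at this
    have e2 : (fun k : ℕ => 1 / ((2 * k : ℕ) : ℝ) ^ 2) = fun k : ℕ => 1 / 4 * (1 / (k : ℝ) ^ 2) := by
      funext k
      push_cast
      rw [mul_pow, one_div, one_div, one_div, mul_inv]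
      norm_num
    rw [e2]
    exact this
  have h1 : HasSum (fun k : ℕ => 1 / ((2 * k + 1 : ℕ) : ℝ) ^ 2) (chi 1) := by
    have := chi_summable_one.hasSum
    unfold chi
    simpa using this
  have h3 := HasSum.even_add_odd (f := fun n : ℕ => 1 / (n : ℝ) ^ 2) h2 h1
  have := h3.unique hasSum_zeta_two
  linarith

lemma chi_zero : chi 0 = 0 := by simp [chi]

lemma chi_cont : ContinuousOn chi (Set.Icc 0 1) := by
  unfold chi
  refine continuousOn_tsum (u := fun k : ℕ => 1 / (2 * (k : ℝ) + 1) ^ 2) ?_ chi_summable_one ?_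
  · intro k
    fun_prop
  · intro k x hx
    rw [Real.norm_eq_abs, abs_of_nonneg (div_nonneg (pow_nonneg hx.1 _) (by positivity))]
    gcongr
    exact pow_le_one₀ hx.1 hx.2

lemma chi_deriv {x : ℝ} (h0 : 0 < x) (h1 : x < 1) :
    HasDerivAt chi ((Real.log (1 + x) - Real.log (1 - x)) / (2 * x)) x := by
  obtain ⟨r, hr, hr1⟩ := exists_between h1
  have hs := Real.hasSum_log_sub_log_of_abs_lt_one (x := x) (by rw [abs_of_pos h0]; exact h1)
  have hs2 : HasSum (fun k : ℕ => x ^ (2 * k) / (2 * (k : ℝ) + 1))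
      ((Real.log (1 + x) - Real.log (1 - x)) / (2 * x)) := by
    have e : (fun k : ℕ => x ^ (2 * k) / (2 * (k : ℝ) + 1)) =
        fun k : ℕ => 2 * (1 / (2 * (k : ℝ) + 1)) * x ^ (2 * k + 1) / (2 * x) := by
      funext k
      rw [pow_succ]
      field_simp
    rw [e]
    exact hs.div_const (2 * x)
  rw [← hs2.tsum_eq]
  unfold chi
  have hr0 : 0 < r := h0.trans hr
  refine hasDerivAt_tsum_of_isPreconnected (t := Set.Ioo 0 r) (u := fun k : ℕ => (r ^ 2) ^ k)
    (g := fun (k : ℕ) (x : ℝ) => x ^ (2 * k + 1) / (2 * (k : ℝ) + 1) ^ 2)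
    (g' := fun (k : ℕ) (x : ℝ) => x ^ (2 * k) / (2 * (k : ℝ) + 1)) (y₀ := x)
    (summable_geometric_of_lt_one (by positivity) (by nlinarith)) isOpen_Ioo isPreconnected_Ioo
    ?_ ?_ ⟨h0, hr⟩ ?_ ⟨h0, hr⟩
  · intro k y hy
    have := (hasDerivAt_pow (2 * k + 1) y).div_const ((2 * (k : ℝ) + 1) ^ 2)
    refine this.congr_deriv ?_
    push_cast
    field_simp
  · intro k y hy
    rw [Real.norm_eq_abs, abs_of_nonneg (div_nonneg (pow_nonneg hy.1.le _) (by positivity)),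
      ← pow_mul]
    refine (div_le_self (pow_nonneg hy.1.le _) ?_).trans
      (pow_le_pow_left₀ hy.1.le hy.2.le _)
    have : (0 : ℝ) ≤ k := by positivity
    linarith
  · refine Summable.of_nonneg_of_le (fun k => by positivity) (fun k => ?_) chi_summable_one
    gcongr
    exact pow_le_one₀ h0.le h1.le

noncomputable def chiG (x : ℝ) : ℝ :=
  chi ((1 - x) / (1 + x)) + chi x - 1 / 2 * Real.log x * (Real.log (1 + x) - Real.log (1 - x))

lemma chiG_deriv {x : ℝ} (h0 : 0 < x) (h1 : x < 1) : HasDerivAt chiG 0 x := by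
  have hp : 0 < 1 + x := by linarith
  have hm : 0 < 1 - x := by linarith
  have hy0 : 0 < (1 - x) / (1 + x) := by positivity
  have hy1 : (1 - x) / (1 + x) < 1 := by rw [div_lt_one hp]; linarith
  have dp : HasDerivAt (fun x : ℝ => 1 + x) 1 x := (hasDerivAt_id x).const_add 1
  have dm : HasDerivAt (fun x : ℝ => 1 - x) (-1) x := (hasDerivAt_id x).const_sub 1
  have d1 := HasDerivAt.comp x (chi_deriv hy0 hy1) (dm.div dp hp.ne')
  have d2 := ((Real.hasDerivAt_log h0.ne').const_mul (1 / 2)).mul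
    ((dp.log hp.ne').sub (dm.log hm.ne'))
  have d := (d1.add (chi_deriv h0 h1)).sub d2
  refine HasDerivAt.congr_deriv (f := chiG) d ?_
  have e1 : 1 + (1 - x) / (1 + x) = 2 / (1 + x) := by field_simp; ring
  have e2 : 1 - (1 - x) / (1 + x) = 2 * x / (1 + x) := by field_simp; ring
  simp only [Pi.sub_apply, Pi.div_apply]
  rw [e1, e2, Real.log_div (by norm_num) hp.ne', Real.log_div (by positivity) hp.ne',
    Real.log_mul (by norm_num) h0.ne']
  have hm' := hm.ne'
  field_simp
  ring

open Filter Topology in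
lemma chiG_lim : Tendsto chiG (𝓝[<] 1) (𝓝 (Real.pi ^ 2 / 8)) := by
  have hI : ∀ᶠ x : ℝ in 𝓝[<] 1, x ∈ Set.Ioo (1 / 2 : ℝ) 1 :=
    Ioo_mem_nhdsLT (by norm_num)
  have hid : Tendsto (fun x : ℝ => x) (𝓝[<] 1) (𝓝 1) := tendsto_id.mono_left nhdsWithin_le_nhds
  have a1 : Tendsto (fun x : ℝ => chi x) (𝓝[<] 1) (𝓝 (chi 1)) := by
    refine (chi_cont 1 (by simp)).tendsto.comp (tendsto_nhdsWithin_iff.2 ⟨hid, ?_⟩)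
    filter_upwards [hI] with x hx
    exact ⟨by linarith [hx.1], hx.2.le⟩
  have a2 : Tendsto (fun x : ℝ => chi ((1 - x) / (1 + x))) (𝓝[<] 1) (𝓝 (chi 0)) := by
    refine (chi_cont 0 (by simp)).tendsto.comp (tendsto_nhdsWithin_iff.2 ⟨?_, ?_⟩)
    · have := (hid.const_sub 1).div (hid.const_add 1) (by norm_num)
      simp only [sub_self, zero_div] at this
      exact this
    · filter_upwards [hI] with x hx
      have : 0 < 1 + x := by linarith [hx.1]
      refine ⟨div_nonneg (by linarith [hx.2]) this.le, ?_⟩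
      rw [div_le_one this]; linarith [hx.1]
  have a3 : Tendsto (fun x : ℝ => Real.log x * Real.log (1 + x)) (𝓝[<] 1) (𝓝 0) := by
    have := (hid.log (by norm_num)).mul ((hid.const_add 1).log (by norm_num))
    simpa using this
  have a4 : Tendsto (fun x : ℝ => Real.log x * Real.log (1 - x)) (𝓝[<] 1) (𝓝 0) := by
    have b : Tendsto (fun x : ℝ => 2 * |(1 - x) * Real.log (1 - x)|) (𝓝[<] 1) (𝓝 0) := by
      have c : Continuous (fun x : ℝ => 2 * |(1 - x) * Real.log (1 - x)|) := by
        have := Real.continuous_mul_log.comp (continuous_const.sub continuous_id : Continuous fun x : ℝ => 1 - x)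
        exact (continuous_const.mul this.abs)
      have := c.tendsto 1
      simp at this
      exact Tendsto.mono_left (by simpa using this) nhdsWithin_le_nhds
    refine squeeze_zero_norm' ?_ b
    filter_upwards [hI] with x hx
    have hx0 : 0 < x := by linarith [hx.1]
    rw [Real.norm_eq_abs, abs_mul, abs_mul, ← mul_assoc]
    gcongr
    rw [abs_of_nonpos (Real.log_nonpos hx0.le hx.2.le), abs_of_pos (by linarith [hx.2])]
    have h := Real.one_sub_inv_le_log_of_pos hx0
    have : x⁻¹ - 1 ≤ 2 * (1 - x) := by
      rw [← sub_nonneg]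
      have : 2 * (1 - x) - (x⁻¹ - 1) = (1 - x) * (2 * x - 1) / x := by field_simp
      rw [this]
      exact div_nonneg (mul_nonneg (by linarith [hx.2]) (by linarith [hx.1])) hx0.le
    linarith
  have := ((a2.add a1).sub ((a3.sub a4).const_mul (1 / 2)))
  rw [chi_zero, chi_one] at this
  refine Tendsto.congr (fun x => ?_) (by simpa using this)
  unfold chiG
  ring

open Filter Topology in
lemma chiG_eq {x : ℝ} (h0 : 0 < x) (h1 : x < 1) : chiG x = Real.pi ^ 2 / 8 := by
  refine tendsto_nhds_unique (tendsto_const_nhds (x := chiG x) (f := 𝓝[<] (1 : ℝ))) ?_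
  refine chiG_lim.congr' ?_
  filter_upwards [Ioo_mem_nhdsLT (a := (0 : ℝ)) (b := 1) (by norm_num)] with y hy
  exact (isOpen_Ioo (a := (0 : ℝ)) (b := 1)).is_const_of_deriv_eq_zero isPreconnected_Ioo
    (fun z hz => (chiG_deriv hz.1 hz.2).differentiableAt.differentiableWithinAt)
    (fun z hz => (chiG_deriv hz.1 hz.2).deriv) hy ⟨h0, h1⟩

lemma chi_val : chi (Real.exp (-Real.log (1 + √2))) =
    Real.pi ^ 2 / 16 - Real.log (1 + √2) ^ 2 / 4 := by
  have hs : √2 ^ 2 = 2 := Real.sq_sqrt (by norm_num)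
  have hs1 : 1 < √2 := by nlinarith [Real.sqrt_nonneg 2]
  have hp : 0 < 1 + √2 := by linarith
  rw [Real.exp_neg, Real.exp_log hp]
  set x := (1 + √2)⁻¹ with hx
  have h0 : 0 < x := by positivity
  have hxe : x = √2 - 1 := by rw [hx]; field_simp; nlinarith
  have h1 : x < 1 := by rw [hxe]; nlinarith
  have h := chiG_eq h0 h1
  have hfix : (1 - x) / (1 + x) = x := by
    rw [div_eq_iff (by linarith), hxe]; nlinarith
  have hl : Real.log (1 + x) - Real.log (1 - x) = -Real.log x := by
    rw [← Real.log_div (by linarith) (by linarith), ← Real.log_inv]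
    nth_rewrite 3 [← hfix]
    rw [inv_div]
  have hlx : Real.log x = -Real.log (1 + √2) := Real.log_inv _
  unfold chiG at h
  rw [hfix, hl, hlx] at h
  linarith

lemma key_log {u v : ℝ} (hv : 0 < u + v) (h : Real.cosh v = Real.sinh u) :
    Real.log (1 + Real.exp (-(u + v))) - Real.log (1 - Real.exp (-(u + v))) = u - v := by
  have h1 : Real.exp (-(u + v)) < 1 := by rw [Real.exp_lt_one_iff]; linarith
  have h0 := Real.exp_pos (-(u + v))
  have : 1 + Real.exp (-(u + v)) = Real.exp (u - v) * (1 - Real.exp (-(u + v))) := by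
    rw [Real.cosh_eq, Real.sinh_eq] at h
    have e1 : Real.exp v * Real.exp (-v) = 1 := by rw [← Real.exp_add]; simp
    have e2 : Real.exp u * Real.exp (-u) = 1 := by rw [← Real.exp_add]; simp
    rw [neg_add, Real.exp_add, sub_eq_add_neg u v, Real.exp_add]
    linear_combination (2 * Real.exp (-v)) * h - e1 + Real.exp (-v) ^ 2 * e2
  rw [this, Real.log_mul (Real.exp_pos _).ne' (by linarith), Real.log_exp]
  ring

/-- With α = ln(1+√2), ∫_α^∞ [u − arcosh(sinh u)] du = π²/16 − (1/2)·ln²(1+√2). -/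
theorem integral_id_sub_arcosh_sinh :
    (∫ u in Set.Ioi (Real.log (1 + Real.sqrt 2)), (u - arcosh (Real.sinh u))) =
      Real.pi ^ 2 / 16 - (1 / 2) * Real.log (1 + Real.sqrt 2) ^ 2 := by
  have hae : arcosh = Real.arcosh := rfl
  rw [hae]
  have hα : Real.log (1 + √2) = Real.arsinh 1 := by
    unfold Real.arsinh; norm_num
  have hcv := chi_val
  rw [hα] at hcv ⊢
  set α := Real.arsinh 1 with hαd
  have hsα : Real.sinh α = 1 := Real.sinh_arsinh 1
  have hα0 : 0 < α := Real.arsinh_pos_iff.2 one_pos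
  set v : ℝ → ℝ := fun u => Real.arcosh (Real.sinh u) with hv
  have hvα : v α = 0 := by simp [hv, hsα]
  have hs1 : ∀ u, α ≤ u → 1 ≤ Real.sinh u := fun u hu => by
    rw [← hsα]; exact Real.sinh_le_sinh.2 hu
  have hv0 : ∀ u, α ≤ u → 0 ≤ v u := fun u hu => Real.arcosh_nonneg (hs1 u hu)
  have hvc : ∀ u, α ≤ u → Real.cosh (v u) = Real.sinh u := fun u hu =>
    Real.cosh_arcosh (hs1 u hu)
  have ht1 : ∀ u, α ≤ u → Real.exp (-(u + v u)) < 1 := fun u hu => by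
    rw [Real.exp_lt_one_iff]; linarith [hv0 u hu]
  have hkey : ∀ u, α ≤ u → Real.log (1 + Real.exp (-(u + v u)))
      - Real.log (1 - Real.exp (-(u + v u))) = u - v u := fun u hu =>
    key_log (by linarith [hv0 u hu]) (hvc u hu)
  have hchi : ∀ u, α ≤ u → HasDerivAt chi ((u - v u) / (2 * Real.exp (-(u + v u))))
      (Real.exp (-(u + v u))) := fun u hu => by
    rw [← hkey u hu]; exact chi_deriv (Real.exp_pos _) (ht1 u hu)
  have hvcont : ContinuousWithinAt v (Set.Ici α) α := by
    have := Real.continuousOn_arcosh.comp (s := Set.Ici α) Real.continuous_sinh.continuousOn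
      (fun u hu => hs1 u hu)
    exact this α Set.self_mem_Ici
  have hlimt : Filter.Tendsto (fun u => Real.exp (-(u + v u))) Filter.atTop (nhds 0) := by
    refine Real.tendsto_exp_neg_atTop_nhds_zero.comp ?_
    refine Filter.tendsto_atTop_mono' _ ?_ Filter.tendsto_id
    filter_upwards [Filter.eventually_ge_atTop α] with u hu
    simpa using hv0 u hu
  have main := MeasureTheory.integral_Ioi_of_hasDerivAt_of_nonneg (a := α) (l := 0)
    (g := fun u => -(chi (Real.exp (-(u + v u))) - (u - v u) ^ 2 / 4))
    (g' := fun u => u - v u) ?_ ?_ ?_ ?_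
  · rw [main, hvα]
    simp only [add_zero, sub_zero]
    rw [hcv]; ring
  · have c1 : ContinuousWithinAt (fun u => Real.exp (-(u + v u))) (Set.Ici α) α :=
      (continuousWithinAt_id.add hvcont).neg.rexp
    have c2 := ContinuousAt.comp_continuousWithinAt (g := chi)
      (f := fun u => Real.exp (-(u + v u))) (hchi α le_rfl).continuousAt c1
    exact (c2.sub (((continuousWithinAt_id.sub hvcont).pow 2).div_const 4)).neg
  · intro u hu
    have hu' : α ≤ u := le_of_lt hu
    have hs : 1 < Real.sinh u := by rw [← hsα]; exact Real.sinh_lt_sinh.2 hu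
    have dv : HasDerivAt v _ u := (Real.hasDerivAt_arcosh hs).comp u (Real.hasDerivAt_sinh u)
    generalize (√(Real.sinh u ^ 2 - 1))⁻¹ * Real.cosh u = d at dv
    have dt := ((hasDerivAt_id u).add dv).neg.exp
    have d1 := HasDerivAt.comp u (hchi u hu') dt
    have d2 := (((hasDerivAt_id u).sub dv).pow 2).div_const 4
    refine (d1.sub d2).neg.congr_deriv ?_
    have := Real.exp_pos (-(u + v u))
    simp
    field_simp
    ring
  · intro u hu
    have hu' : α ≤ u := le_of_lt hu
    rw [← hkey u hu', sub_nonneg]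
    have := Real.exp_pos (-(u + v u))
    exact Real.log_le_log (by linarith [ht1 u hu']) (by linarith)
  · have l1 : Filter.Tendsto (fun u => chi (Real.exp (-(u + v u)))) Filter.atTop (nhds 0) := by
      rw [← chi_zero]
      refine (chi_cont 0 (by simp)).tendsto.comp (tendsto_nhdsWithin_iff.2 ⟨hlimt, ?_⟩)
      filter_upwards [Filter.eventually_ge_atTop α] with u hu
      exact ⟨(Real.exp_pos _).le, (ht1 u hu).le⟩
    have l2 : Filter.Tendsto (fun u => u - v u) Filter.atTop (nhds 0) := by
      have := ((hlimt.const_add 1).log (by norm_num)).sub ((hlimt.const_sub 1).log (by norm_num))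
      simp only [add_zero, sub_zero, Real.log_one] at this
      refine this.congr' ?_
      filter_upwards [Filter.eventually_ge_atTop α] with u hu
      exact hkey u hu
    simpa using (l1.sub ((l2.pow 2).div_const 4)).neg
end

section
/- With α = ln(1+√2), the improper integral ∫_{α/2}^∞ ln(tanh z) dz equals (1/4)·ln²(1+√2) − π²/16. -/
noncomputable def chiTwo (x : ℝ) : ℝ := ∑' n : ℕ, x ^ (2 * n + 1) / (2 * (n : ℝ) + 1) ^ 2

theorem summable_odd_sq : Summable (fun n : ℕ => 1 / (2 * (n : ℝ) + 1) ^ 2) := by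
  have h := hasSum_zeta_two.summable.comp_injective
    (i := fun n : ℕ => 2 * n + 1) (fun a b h => by simpa using h)
  refine h.congr fun n => ?_
  simp

theorem chiTwo_one : chiTwo 1 = Real.pi ^ 2 / 8 := by
  have he : HasSum (fun n : ℕ => (1 : ℝ) / (((2 * n : ℕ) : ℝ)) ^ 2) (1 / 4 * (Real.pi ^ 2 / 6)) := by
    refine (hasSum_zeta_two.mul_left (1 / 4)).congr_fun ?_
    intro n
    push_cast
    rw [mul_pow]
    rw [one_div_mul_one_div]
    norm_num
  have ho : HasSum (fun n : ℕ => (1 : ℝ) / (((2 * n + 1 : ℕ) : ℝ)) ^ 2) (chiTwo 1) := by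
    have h := summable_odd_sq.hasSum
    simpa [chiTwo] using h
  have h := (HasSum.even_add_odd (f := fun n : ℕ => (1 : ℝ) / (n : ℝ) ^ 2) he ho).unique
    hasSum_zeta_two
  linarith

theorem chiTwo_zero : chiTwo 0 = 0 := by
  simp [chiTwo]

theorem chiTwo_continuousOn : ContinuousOn chiTwo (Set.Icc 0 1) := by
  unfold chiTwo
  refine continuousOn_tsum (fun i => by fun_prop) summable_odd_sq ?_
  intro n x hx
  have h0 : 0 ≤ x ^ (2 * n + 1) := pow_nonneg hx.1 _
  rw [Real.norm_of_nonneg (by positivity)]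
  gcongr
  exact pow_le_one₀ hx.1 hx.2

theorem chiTwo_hasDerivAt {x : ℝ} (h0 : 0 < x) (h1 : x < 1) :
    HasDerivAt chiTwo ((Real.log (1 + x) - Real.log (1 - x)) / (2 * x)) x := by
  obtain ⟨r, hxr, hr1⟩ := exists_between h1
  have hr0 : 0 < r := h0.trans hxr
  have key := hasDerivAt_tsum_of_isPreconnected
    (g := fun (n : ℕ) (x : ℝ) => x ^ (2 * n + 1) / (2 * (n : ℝ) + 1) ^ 2)
    (g' := fun (n : ℕ) (x : ℝ) => x ^ (2 * n) / (2 * (n : ℝ) + 1))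
    (u := fun n : ℕ => (r ^ 2) ^ n) (t := Set.Ioo 0 r) (y₀ := x) (y := x)
    (summable_geometric_of_lt_one (by positivity) (by nlinarith))
    isOpen_Ioo isPreconnected_Ioo ?_ ?_ ⟨h0, hxr⟩ ?_ ⟨h0, hxr⟩
  · have hs := Real.hasSum_log_sub_log_of_abs_lt_one (x := x) (by rw [abs_of_pos h0]; exact h1)
    have hs2 := (hs.div_const (2 * x)).tsum_eq
    unfold chiTwo
    rw [← hs2]
    refine HasDerivAt.congr_deriv key (tsum_congr fun n => ?_)
    have hn : (2 * (n : ℝ) + 1) ≠ 0 := by positivity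
    rw [pow_succ]
    field_simp
  · intro n y _
    have h := (hasDerivAt_pow (2 * n + 1) y).div_const ((2 * (n : ℝ) + 1) ^ 2)
    refine HasDerivAt.congr_deriv h ?_
    have hn : (2 * (n : ℝ) + 1) ≠ 0 := by positivity
    push_cast
    field_simp
  · intro n y hy
    have hy0 : 0 < y := hy.1
    rw [Real.norm_of_nonneg (by positivity), ← pow_mul]
    have : y ^ (2 * n) ≤ r ^ (2 * n) := pow_le_pow_left₀ hy0.le hy.2.le _
    refine le_trans (div_le_self (by positivity) ?_) this
    have : (0 : ℝ) ≤ n := n.cast_nonneg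
    linarith
  · refine Summable.of_nonneg_of_le (fun n => by positivity) (fun n => ?_) summable_odd_sq
    gcongr
    exact pow_le_one₀ h0.le h1.le

noncomputable def chiAux (x : ℝ) : ℝ :=
  chiTwo x + chiTwo ((1 - x) / (1 + x)) +
    1 / 2 * (Real.log x * (Real.log (1 - x) - Real.log (1 + x)))

theorem chiAux_hasDerivAt {x : ℝ} (h0 : 0 < x) (h1 : x < 1) : HasDerivAt chiAux 0 x := by
  have hx1 : 0 < 1 - x := by linarith
  have hx2 : 0 < 1 + x := by linarith
  have hm : HasDerivAt (fun x : ℝ => 1 - x) (-1) x := by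
    simpa using (hasDerivAt_id x).const_sub 1
  have hp : HasDerivAt (fun x : ℝ => 1 + x) 1 x := by
    simpa using (hasDerivAt_id x).const_add 1
  have hy := hm.fun_div hp hx2.ne'
  have hy0 : 0 < (1 - x) / (1 + x) := by positivity
  have hy1 : (1 - x) / (1 + x) < 1 := by rw [div_lt_one hx2]; linarith
  have hc := (chiTwo_hasDerivAt hy0 hy1).comp x hy
  have hl := ((Real.hasDerivAt_log h0.ne').fun_mul
    ((hm.log hx1.ne').fun_sub (hp.log hx2.ne'))).const_mul (1 / 2)
  have e1 : Real.log (1 + (1 - x) / (1 + x)) = Real.log 2 - Real.log (1 + x) := by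
    rw [← Real.log_div (by norm_num) hx2.ne']
    congr 1
    field_simp
    ring
  have e2 : Real.log (1 - (1 - x) / (1 + x)) = Real.log 2 + Real.log x - Real.log (1 + x) := by
    rw [← Real.log_mul (by norm_num) h0.ne', ← Real.log_div (by positivity) hx2.ne']
    congr 1
    field_simp
    ring
  have hf := ((chiTwo_hasDerivAt h0 h1).add hc).add hl
  rw [e1, e2] at hf
  refine HasDerivAt.congr_deriv (f := chiAux) hf ?_
  field_simp
  ring

theorem chiAux_tendsto :
    Filter.Tendsto chiAux (nhdsWithin 0 (Set.Ioi 0)) (nhds (Real.pi ^ 2 / 8)) := by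
  have hI : Set.Ioo (0 : ℝ) 1 ∈ nhdsWithin (0 : ℝ) (Set.Ioi 0) := Ioo_mem_nhdsGT one_pos
  have t1 : Filter.Tendsto chiTwo (nhdsWithin 0 (Set.Ioi 0)) (nhds 0) := by
    have h := chiTwo_continuousOn 0 (by simp)
    rw [ContinuousWithinAt, chiTwo_zero] at h
    refine h.mono_left (nhdsWithin_le_of_mem ?_)
    exact Filter.mem_of_superset hI Set.Ioo_subset_Icc_self
  have t2 : Filter.Tendsto (fun x : ℝ => chiTwo ((1 - x) / (1 + x)))
      (nhdsWithin 0 (Set.Ioi 0)) (nhds (Real.pi ^ 2 / 8)) := by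
    have h := chiTwo_continuousOn 1 (by simp)
    rw [ContinuousWithinAt, chiTwo_one] at h
    refine h.comp (tendsto_nhdsWithin_iff.2 ⟨?_, ?_⟩)
    · have hc : ContinuousAt (fun x : ℝ => (1 - x) / (1 + x)) 0 := by
        refine ContinuousAt.div (by fun_prop) (by fun_prop) (by norm_num)
      have := hc.tendsto
      norm_num at this
      exact this.mono_left nhdsWithin_le_nhds
    · filter_upwards [hI] with x hx
      have := hx.1
      have := hx.2
      constructor
      · apply div_nonneg <;> linarith
      · rw [div_le_one (by linarith)]; linarith
  have t3 : Filter.Tendsto (fun x : ℝ => Real.log x * (Real.log (1 - x) - Real.log (1 + x)))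
      (nhdsWithin 0 (Set.Ioi 0)) (nhds 0) := by
    have hm : HasDerivAt (fun x : ℝ => 1 - x) (-1) 0 := by
      simpa using (hasDerivAt_id (0 : ℝ)).const_sub 1
    have hp : HasDerivAt (fun x : ℝ => 1 + x) 1 0 := by
      simpa using (hasDerivAt_id (0 : ℝ)).const_add 1
    have hb := ((hm.log (by norm_num)).fun_sub (hp.log (by norm_num))).isBigO_sub
    simp only [sub_zero, add_zero, Real.log_one] at hb
    have hb2 := (Asymptotics.isBigO_refl Real.log (nhdsWithin 0 (Set.Ioi 0))).mul
      (hb.mono nhdsWithin_le_nhds)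
    refine hb2.trans_tendsto ?_
    simpa using tendsto_log_mul_rpow_nhdsGT_zero one_pos
  have := (t1.add t2).add (t3.const_mul (1 / 2))
  rw [zero_add, mul_zero, add_zero] at this
  exact this

theorem chiAux_eq {x : ℝ} (h0 : 0 < x) (h1 : x < 1) : chiAux x = Real.pi ^ 2 / 8 := by
  have hc : ∀ y ∈ Set.Ioo (0 : ℝ) 1, chiAux y = chiAux x := fun y hy =>
    isOpen_Ioo.is_const_of_deriv_eq_zero isPreconnected_Ioo
      (fun z hz => (chiAux_hasDerivAt hz.1 hz.2).differentiableAt.differentiableWithinAt)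
      (fun z hz => (chiAux_hasDerivAt hz.1 hz.2).deriv) hy ⟨h0, h1⟩
  have t : Filter.Tendsto chiAux (nhdsWithin 0 (Set.Ioi 0)) (nhds (chiAux x)) := by
    refine tendsto_const_nhds.congr' ?_
    filter_upwards [Ioo_mem_nhdsGT (one_pos : (0 : ℝ) < 1)] with y hy
    exact (hc y hy).symm
  exact tendsto_nhds_unique t chiAux_tendsto

theorem log_tanh_eq {z : ℝ} (hz : 0 < z) : Real.log (Real.tanh z) =
    Real.log (1 - Real.exp (-2 * z)) - Real.log (1 + Real.exp (-2 * z)) := by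
  have h1 : Real.exp (-2 * z) < 1 := by rw [Real.exp_lt_one_iff]; linarith
  have h0 := Real.exp_pos (-2 * z)
  rw [← Real.log_div (by linarith) (by linarith), Real.tanh_eq]
  congr 1
  have e : Real.exp (-2 * z) = Real.exp (-z) * Real.exp (-z) := by
    rw [← Real.exp_add]; ring_nf
  have e' : Real.exp z * Real.exp (-z) = 1 := by rw [← Real.exp_add]; simp
  have := Real.exp_pos z
  have := Real.exp_pos (-z)
  rw [e, div_eq_div_iff (by positivity) (by positivity)]
  linear_combination (2 * Real.exp (-z)) * e'

/-- With α = ln(1+√2), ∫_{α/2}^∞ ln(tanh z) dz = (1/4)·ln²(1+√2) − π²/16. -/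
theorem integral_log_tanh :
    (∫ z in Set.Ioi (Real.log (1 + Real.sqrt 2) / 2), Real.log (Real.tanh z)) =
      (1 / 4) * Real.log (1 + Real.sqrt 2) ^ 2 - Real.pi ^ 2 / 16 := by
  have hs : 0 < Real.sqrt 2 := by positivity
  have hs2 : Real.sqrt 2 * Real.sqrt 2 = 2 := Real.mul_self_sqrt (by norm_num)
  have ha : 0 < Real.log (1 + Real.sqrt 2) := Real.log_pos (by linarith)
  have hexp : Real.exp (-2 * (Real.log (1 + Real.sqrt 2) / 2)) = Real.sqrt 2 - 1 := by
    rw [show -2 * (Real.log (1 + Real.sqrt 2) / 2) = -Real.log (1 + Real.sqrt 2) by ring,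
      Real.exp_neg, Real.exp_log (by positivity)]
    refine inv_eq_of_mul_eq_one_right ?_
    linear_combination hs2
  have hint := MeasureTheory.integral_Ioi_of_hasDerivAt_of_nonpos'
    (g := fun z => chiTwo (Real.exp (-2 * z))) (g' := fun z => Real.log (Real.tanh z))
    (a := Real.log (1 + Real.sqrt 2) / 2) (l := 0) ?_ ?_ ?_
  · rw [hint, hexp]
    have h1 : Real.sqrt 2 < 2 := by nlinarith
    have h0 : 1 < Real.sqrt 2 := by nlinarith
    have hx := chiAux_eq (x := Real.sqrt 2 - 1) (by linarith) (by linarith)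
    unfold chiAux at hx
    have hy : (1 - (Real.sqrt 2 - 1)) / (1 + (Real.sqrt 2 - 1)) = Real.sqrt 2 - 1 := by
      rw [div_eq_iff (by linarith)]
      linear_combination -hs2
    have hl : Real.log (Real.sqrt 2 - 1) = - Real.log (1 + Real.sqrt 2) := by
      rw [← hexp, Real.log_exp]; ring
    rw [← Real.log_div (by linarith) (by linarith), hy, hl] at hx
    linarith
  · intro z hz
    have hz0 : 0 < z := lt_of_lt_of_le (by positivity) hz
    have h1 : Real.exp (-2 * z) < 1 := by rw [Real.exp_lt_one_iff]; linarith
    have h0 := Real.exp_pos (-2 * z)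
    have hd : HasDerivAt (fun z : ℝ => Real.exp (-2 * z)) (Real.exp (-2 * z) * (-2)) z := by
      have := ((hasDerivAt_id z).const_mul (-2)).exp
      simpa using this
    have hc := (chiTwo_hasDerivAt h0 h1).comp z hd
    rw [log_tanh_eq hz0]
    refine HasDerivAt.congr_deriv hc ?_
    field_simp
    ring
  · intro z hz
    have hz0 : 0 < z := lt_trans (by positivity) hz
    have h1 : Real.exp (-2 * z) < 1 := by rw [Real.exp_lt_one_iff]; linarith
    have h0 := Real.exp_pos (-2 * z)
    rw [log_tanh_eq hz0]
    have := Real.log_le_log (x := 1 - Real.exp (-2 * z)) (y := 1 + Real.exp (-2 * z))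
      (by linarith) (by linarith)
    linarith
  · have h := chiTwo_continuousOn 0 (by simp)
    rw [ContinuousWithinAt, chiTwo_zero] at h
    refine h.comp (tendsto_nhdsWithin_iff.2 ⟨?_, ?_⟩)
    · refine Real.tendsto_exp_atBot.comp ?_
      exact Filter.tendsto_id.const_mul_atTop_of_neg (by norm_num)
    · filter_upwards [Filter.eventually_gt_atTop 0] with z hz
      refine ⟨(Real.exp_pos _).le, ?_⟩
      rw [Real.exp_le_one_iff]; linarith
end

section
/- Li₂(√2 − 1) + Li₂(1 − √2/2) = π²/8 − (1/2)·ln²(1+√2) − (1/8)·ln² 2. -/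
/-- The real dilogarithm Li₂(z) = ∑_{k=1}^∞ z^k/k², for |z| ≤ 1. -/
noncomputable def Li2 (z : ℝ) : ℝ := ∑' k : ℕ, z ^ (k + 1) / ((k : ℝ) + 1) ^ 2

lemma Li2_hasDerivAt {x : ℝ} (hx : |x| < 1) (h0 : x ≠ 0) :
    HasDerivAt Li2 (-Real.log (1 - x) / x) x := by
  obtain ⟨r, hr1, hr2⟩ := exists_between hx
  have hr0 : 0 ≤ r := (abs_nonneg x).trans hr1.le
  have key : HasDerivAt (fun z : ℝ => ∑' k : ℕ, z ^ (k + 1) / ((k : ℝ) + 1) ^ 2)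
      (∑' k : ℕ, x ^ k / ((k : ℝ) + 1)) x := by
    refine hasDerivAt_tsum_of_isPreconnected (u := fun k : ℕ => r ^ k)
      (g := fun (k : ℕ) (z : ℝ) => z ^ (k + 1) / ((k : ℝ) + 1) ^ 2)
      (g' := fun (k : ℕ) (z : ℝ) => z ^ k / ((k : ℝ) + 1))
      (t := Metric.ball (0 : ℝ) r) (y₀ := 0)
      (summable_geometric_of_lt_one hr0 hr2) Metric.isOpen_ball
      (convex_ball (0 : ℝ) r).isPreconnected ?_ ?_ ?_ ?_ ?_
    · intro n y _
      have h := (hasDerivAt_pow (n + 1) y).div_const (((n : ℝ) + 1) ^ 2)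
      refine HasDerivAt.congr_deriv (h) ?_
      have : (n : ℝ) + 1 ≠ 0 := by positivity
      push_cast
      field_simp
    · intro n y hy
      rw [mem_ball_zero_iff, Real.norm_eq_abs] at hy
      rw [Real.norm_eq_abs, abs_div, abs_pow, abs_of_pos (by positivity : (0 : ℝ) < n + 1)]
      calc |y| ^ n / ((n : ℝ) + 1) ≤ |y| ^ n := by
            apply div_le_self (by positivity)
            linarith [(Nat.cast_nonneg n : (0 : ℝ) ≤ n)]
        _ ≤ r ^ n := by gcongr
    · rw [mem_ball_zero_iff, norm_zero]; exact (abs_nonneg x).trans_lt hr1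
    · simp [summable_zero]
    · rw [mem_ball_zero_iff, Real.norm_eq_abs]; exact hr1
  have hs := (Real.hasSum_pow_div_log_of_abs_lt_one hx).div_const x
  have e : ∑' k : ℕ, x ^ k / ((k : ℝ) + 1) = -Real.log (1 - x) / x := by
    rw [← hs.tsum_eq]
    congr 1; ext k
    have : (k : ℝ) + 1 ≠ 0 := by positivity
    field_simp
    ring
  rw [e] at key
  exact key

lemma summable_aux : Summable fun k : ℕ => 1 / ((k : ℝ) + 1) ^ 2 := by
  have := (summable_nat_add_iff 1).2 (Real.summable_one_div_nat_pow.2 (one_lt_two))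
  simpa using this

lemma Li2_continuousOn : ContinuousOn Li2 (Set.Icc (-1) 1) := by
  unfold Li2
  refine continuousOn_tsum (u := fun k : ℕ => 1 / ((k : ℝ) + 1) ^ 2) ?_ summable_aux ?_
  · intro k; fun_prop
  · intro k x hx
    rw [Real.norm_eq_abs, abs_div, abs_pow, abs_of_pos (by positivity : (0 : ℝ) < ((k:ℝ) + 1)^2)]
    gcongr
    exact pow_le_one₀ (abs_nonneg _) (abs_le.2 hx)

lemma Li2_zero : Li2 0 = 0 := by simp [Li2]

lemma Li2_one : Li2 1 = Real.pi ^ 2 / 6 := by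
  have h := hasSum_zeta_two
  rw [← hasSum_nat_add_iff' 1] at h
  simpa [Li2] using h.tsum_eq

lemma Li2_neg_one : Li2 1 - Li2 (-1) = Real.pi ^ 2 / 4 := by
  have hs := summable_aux
  have hs' : Summable fun k : ℕ => (-1 : ℝ) ^ (k + 1) / ((k : ℝ) + 1) ^ 2 := by
    refine Summable.of_norm_bounded hs ?_
    intro k
    simp
  have e1 : Li2 1 + Li2 (-1) = Li2 1 / 2 := by
    unfold Li2
    simp only [one_pow]
    rw [← Summable.tsum_add hs hs', ← tsum_div_const]
    have hsum := hs.add hs'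
    rw [← tsum_even_add_odd (f := fun k : ℕ => 1 / ((k : ℝ) + 1) ^ 2 + (-1 : ℝ) ^ (k + 1) / ((k : ℝ) + 1) ^ 2)
      (hsum.comp_injective (mul_right_injective₀ (two_ne_zero)))
      (hsum.comp_injective ((add_left_injective 1).comp (mul_right_injective₀ (two_ne_zero))))]
    have z : ∀ k : ℕ, (1 / (((2 * k : ℕ) : ℝ) + 1) ^ 2 + (-1 : ℝ) ^ (2 * k + 1) / (((2 * k : ℕ) : ℝ) + 1) ^ 2) = 0 := by
      intro k
      rw [Odd.neg_one_pow ⟨k, rfl⟩]; ring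
    simp only [z, tsum_zero, zero_add]
    congr 1; ext k
    have : (-1 : ℝ) ^ (2 * k + 1 + 1) = 1 := by
      rw [show 2 * k + 1 + 1 = 2 * (k + 1) by ring, pow_mul]; simp
    rw [this]
    have : (k : ℝ) + 1 ≠ 0 := by positivity
    push_cast
    rw [show (2 * (k : ℝ) + 1 + 1) = 2 * (k + 1) by ring]
    field_simp
    norm_num
  rw [Li2_one] at *
  linarith

lemma const_aux {f : ℝ → ℝ} {a : ℝ} (ha : 0 < a) (hc : ContinuousOn f (Set.Icc 0 a))
    (hd : ∀ x ∈ Set.Ioo 0 a, HasDerivAt f 0 x) : f a = f 0 := by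
  obtain ⟨c, _, h⟩ := exists_hasDerivAt_eq_slope f (fun _ => 0) ha hc hd
  have : a - 0 ≠ 0 := by simpa using ha.ne'
  field_simp at h
  linarith

lemma landen {a : ℝ} (ha : 0 < a) (ha1 : a < 1) :
    Li2 (-a) + Li2 (a / (1 + a)) + Real.log (1 + a) ^ 2 / 2 = 0 := by
  have := const_aux (f := fun a => Li2 (-a) + Li2 (a / (1 + a)) + Real.log (1 + a) ^ 2 / 2)
    ha ?_ ?_
  · simpa [Li2_zero] using this
  · refine ContinuousOn.add (ContinuousOn.add ?_ ?_) ?_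
    · refine Li2_continuousOn.comp (by fun_prop) ?_
      intro x hx; constructor <;> linarith [hx.1, hx.2]
    · refine Li2_continuousOn.comp ?_ ?_
      · refine ContinuousOn.div (by fun_prop) (by fun_prop) ?_
        intro x hx; linarith [hx.1]
      · intro x hx
        have : 0 < 1 + x := by linarith [hx.1]
        constructor
        · rw [le_div_iff₀ this]; linarith [hx.1]
        · rw [div_le_iff₀ this]; linarith [hx.1]
    · refine ContinuousOn.div_const (ContinuousOn.pow (ContinuousOn.log (by fun_prop) ?_) 2) 2
      intro x hx; linarith [hx.1]
  · intro x hx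
    have h0 := hx.1
    have h1 : x < 1 := hx.2.trans ha1
    have hp : 0 < 1 + x := by linarith
    have hq : 0 < x / (1 + x) := by positivity
    have hq1 : x / (1 + x) < 1 := by rw [div_lt_one hp]; linarith
    have d1 := (Li2_hasDerivAt (x := -x) (by rw [abs_neg, abs_of_pos h0]; exact h1)
      (by linarith)).comp x (hasDerivAt_neg x)
    have di : HasDerivAt (fun x : ℝ => 1 + x) 1 x := (hasDerivAt_id x).const_add 1
    have d2 := (Li2_hasDerivAt (x := x / (1 + x)) (by rw [abs_of_pos hq]; exact hq1)
      hq.ne').comp x ((hasDerivAt_id x).div di hp.ne')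
    have d3 := ((di.log hp.ne').pow 2).div_const 2
    refine HasDerivAt.congr_deriv ((d1.add d2).add d3) ?_
    have e : 1 - x / (1 + x) = (1 + x)⁻¹ := by field_simp; ring
    rw [e, Real.log_inv]
    simp
    field_simp
    ring

lemma D_hasDerivAt {x : ℝ} (h0 : 0 < x) (h1 : x < 1) :
    HasDerivAt (fun x => Li2 x - Li2 (-x)) ((Real.log (1 + x) - Real.log (1 - x)) / x) x := by
  have hx : |x| < 1 := by rw [abs_of_pos h0]; exact h1
  have d1 := (Li2_hasDerivAt (x := -x) (by rwa [abs_neg])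
      (by linarith)).comp x (hasDerivAt_neg x)
  refine HasDerivAt.congr_deriv ((Li2_hasDerivAt hx h0.ne').sub d1) ?_
  simp
  field_simp
  ring

lemma D_continuousOn : ContinuousOn (fun x => Li2 x - Li2 (-x)) (Set.Icc (-1) 1) := by
  refine Li2_continuousOn.sub (Li2_continuousOn.comp (by fun_prop) ?_)
  intro x hx; constructor <;> linarith [hx.1, hx.2]

lemma L_hasDerivAt {x : ℝ} (h0 : 0 ≤ x) (h1 : x < 1) :
    HasDerivAt (fun x => Real.log (1 + x) - Real.log (1 - x)) (1 / (1 + x) + 1 / (1 - x)) x := by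
  have d1 : HasDerivAt (fun x : ℝ => 1 + x) 1 x := (hasDerivAt_id x).const_add 1
  have d2 : HasDerivAt (fun x : ℝ => 1 - x) (-1) x := (hasDerivAt_id x).const_sub 1
  refine HasDerivAt.congr_deriv ((d1.log (by linarith)).sub (d2.log (by linarith))) ?_
  rw [neg_div, sub_neg_eq_add]

lemma chi_s8 {a : ℝ} (ha : 0 < a) (ha1 : a < 1) :
    (Li2 a - Li2 (-a)) + (Li2 ((1 - a) / (1 + a)) - Li2 (-((1 - a) / (1 + a))))
      - Real.log a * (Real.log (1 + a) - Real.log (1 - a)) = Real.pi ^ 2 / 4 := by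
  have := const_aux (f := fun a => (Li2 a - Li2 (-a)) +
      (Li2 ((1 - a) / (1 + a)) - Li2 (-((1 - a) / (1 + a))))
      - Real.log a * (Real.log (1 + a) - Real.log (1 - a))) ha ?_ ?_
  · simpa [Li2_zero, Li2_neg_one] using this
  · refine ContinuousOn.sub (ContinuousOn.add ?_ ?_) ?_
    · refine D_continuousOn.mono ?_
      intro x hx; constructor <;> linarith [hx.1, hx.2]
    · refine D_continuousOn.comp (f := fun x : ℝ => (1 - x) / (1 + x)) ?_ ?_
      · refine ContinuousOn.div (by fun_prop) (by fun_prop) ?_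
        intro x hx; linarith [hx.1]
      · intro x hx
        have : 0 < 1 + x := by linarith [hx.1]
        constructor
        · rw [le_div_iff₀ this]; linarith [hx.1]
        · rw [div_le_iff₀ this]; linarith [hx.1]
    · intro x hx
      apply ContinuousAt.continuousWithinAt
      have hL := L_hasDerivAt hx.1 (hx.2.trans_lt ha1)
      rcases hx.1.eq_or_lt with h | h
      · subst h
        have hc := (continuousAt_dslope_same.2 hL.differentiableAt)
        have := (Real.continuous_mul_log.continuousAt (x := 0)).mul hc
        convert this using 1
        ext y
        have hy := sub_smul_dslope (fun x => Real.log (1 + x) - Real.log (1 - x)) 0 y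
        simp at hy
        simp only [Pi.mul_apply]
        rw [← hy]; ring
      · exact (Real.continuousAt_log h.ne').mul hL.continuousAt
  · intro x hx
    have h0 := hx.1
    have h1 : x < 1 := hx.2.trans ha1
    have hp : 0 < 1 + x := by linarith
    have hm : 0 < 1 - x := by linarith
    have hq : 0 < (1 - x) / (1 + x) := by positivity
    have hq1 : (1 - x) / (1 + x) < 1 := by rw [div_lt_one hp]; linarith
    have di : HasDerivAt (fun x : ℝ => 1 + x) 1 x := (hasDerivAt_id x).const_add 1
    have dj : HasDerivAt (fun x : ℝ => 1 - x) (-1) x := (hasDerivAt_id x).const_sub 1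
    have d2 := (D_hasDerivAt hq hq1).comp x (dj.div di hp.ne')
    have d3 := (Real.hasDerivAt_log h0.ne').mul (L_hasDerivAt h0.le h1)
    refine HasDerivAt.congr_deriv (((D_hasDerivAt h0 h1).add d2).sub d3) ?_
    have e1 : 1 + (1 - x) / (1 + x) = 2 / (1 + x) := by field_simp; ring
    have e2 : 1 - (1 - x) / (1 + x) = 2 * x / (1 + x) := by field_simp; ring
    rw [e1, e2, Real.log_div (by norm_num) hp.ne', Real.log_div (by positivity) hp.ne',
      Real.log_mul (by norm_num) h0.ne']
    field_simp
    ring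

/-- Li₂(√2 − 1) + Li₂(1 − √2/2) = π²/8 − (1/2)·ln²(1+√2) − (1/8)·ln² 2. -/
theorem dilog_two_term_identity :
    Li2 (Real.sqrt 2 - 1) + Li2 (1 - Real.sqrt 2 / 2) =
      Real.pi ^ 2 / 8 - (1 / 2) * Real.log (1 + Real.sqrt 2) ^ 2
        - (1 / 8) * Real.log 2 ^ 2 := by
  have hs : Real.sqrt 2 ^ 2 = 2 := Real.sq_sqrt (by norm_num)
  have hs1 : 1 < Real.sqrt 2 := Real.lt_sqrt_of_sq_lt (by norm_num)
  have hs2 : Real.sqrt 2 < 2 := by nlinarith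
  have hl : Real.log (Real.sqrt 2) = Real.log 2 / 2 := Real.log_sqrt (by norm_num)
  have A := landen (a := Real.sqrt 2 - 1) (by linarith) (by linarith)
  have B := chi_s8 (a := Real.sqrt 2 - 1) (by linarith) (by linarith)
  have e0 : 1 + (Real.sqrt 2 - 1) = Real.sqrt 2 := by ring
  have e1 : (Real.sqrt 2 - 1) / Real.sqrt 2 = 1 - Real.sqrt 2 / 2 := by
    field_simp; nlinarith
  have e2 : (1 - (Real.sqrt 2 - 1)) / Real.sqrt 2 = Real.sqrt 2 - 1 := by
    field_simp; nlinarith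
  have e3 : Real.sqrt 2 - 1 = (1 + Real.sqrt 2)⁻¹ := by
    apply eq_inv_of_mul_eq_one_left; nlinarith
  have e4 : Real.log (Real.sqrt 2 - 1) = - Real.log (1 + Real.sqrt 2) := by
    rw [e3, Real.log_inv]
  have e5 : Real.log (1 - (Real.sqrt 2 - 1)) = Real.log 2 / 2 - Real.log (1 + Real.sqrt 2) := by
    rw [sub_eq_add_neg (Real.log 2 / 2), ← e4, ← hl, ← Real.log_mul (by linarith) (by linarith)]
    congr 1; nlinarith
  rw [e0, e1, hl] at A
  rw [e0, e2, e4, e5, hl] at B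
  linarith
end

section
/- The double integral over the unit square ∫₀¹ ∫₀¹ 1/(1 − x·y) dx dy equals π²/6. -/
theorem beukers_aux (a : ℕ → ℝ) (ha : ∀ n, 0 ≤ a n) (hs : Summable fun n : ℕ => a n / (n + 1)) :
    HasSum (fun n : ℕ => a n / (n + 1)) (∫ x in (0:ℝ)..1, ∑' n, a n * x ^ n) := by
  rw [intervalIntegral.integral_of_le zero_le_one]
  have hI : ∀ n : ℕ, ∫ x in Set.Ioc (0:ℝ) 1, a n * x ^ n = a n / (n + 1) := by
    intro n
    rw [← intervalIntegral.integral_of_le zero_le_one, intervalIntegral.integral_const_mul,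
      integral_pow]
    simp [div_eq_mul_inv]
  have hN : ∀ n : ℕ, ∫ x in Set.Ioc (0:ℝ) 1, ‖a n * x ^ n‖ = a n / (n + 1) := by
    intro n
    rw [← hI n]
    refine MeasureTheory.setIntegral_congr_fun measurableSet_Ioc ?_
    intro x hx
    exact Real.norm_of_nonneg (mul_nonneg (ha n) (pow_nonneg hx.1.le n))
  have h := MeasureTheory.hasSum_integral_of_summable_integral_norm
    (μ := MeasureTheory.volume.restrict (Set.Ioc (0:ℝ) 1)) (F := fun (n : ℕ) (x : ℝ) => a n * x ^ n)
    (fun n => ?_) (by simpa only [hN] using hs)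
  · simpa only [hI] using h
  · rw [← MeasureTheory.IntegrableOn, ← intervalIntegrable_iff_integrableOn_Ioc_of_le zero_le_one]
    exact (by fun_prop : Continuous fun x : ℝ => a n * x ^ n).intervalIntegrable _ _

/-- ∫₀¹ ∫₀¹ 1/(1 − x·y) dx dy = π²/6. -/
theorem beukers_integral_eq_pi_sq_div_six :
    (∫ y in (0:ℝ)..1, ∫ x in (0:ℝ)..1, 1 / (1 - x * y)) = Real.pi ^ 2 / 6 := by
  have hz : HasSum (fun n : ℕ => (1 / ((n:ℝ) + 1)) / (n + 1)) (Real.pi ^ 2 / 6) := by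
    have h := (hasSum_nat_add_iff' 1).2 hasSum_zeta_two
    simp only [Finset.range_one, Finset.sum_singleton, Nat.cast_zero] at h
    have e : (fun n : ℕ => (1 / ((n:ℝ) + 1)) / (n + 1)) =
        fun n : ℕ => 1 / ((n + 1 : ℕ) : ℝ) ^ 2 := by
      funext n
      push_cast
      field_simp
    rw [e]
    have e2 : Real.pi ^ 2 / 6 - 1 / (0:ℝ) ^ 2 = Real.pi ^ 2 / 6 := by simp
    rw [e2] at h
    exact h
  have h2 := beukers_aux (fun n => 1 / ((n:ℝ) + 1)) (fun n => by positivity) hz.summable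
  rw [← h2.unique hz]
  apply intervalIntegral.integral_congr_ae
  have h1 : ∀ᵐ y : ℝ, y ≠ 1 := by
    simp [MeasureTheory.ae_iff]
  filter_upwards [h1] with y hy1 hy
  rw [Set.uIoc_of_le zero_le_one] at hy
  have hlt : y < 1 := lt_of_le_of_ne hy.2 hy1
  have h3 := beukers_aux (fun n => y ^ n) (fun n => pow_nonneg hy.1.le n) (by
    refine Summable.of_nonneg_of_le (fun n => ?_) (fun n => ?_)
      (summable_geometric_of_lt_one hy.1.le hlt)
    · have := hy.1
      positivity
    · exact div_le_self (pow_nonneg hy.1.le n) (by simp))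
  calc ∫ x in (0:ℝ)..1, 1 / (1 - x * y) = ∫ x in (0:ℝ)..1, ∑' n : ℕ, y ^ n * x ^ n := by
        apply intervalIntegral.integral_congr
        intro x hx
        rw [Set.uIcc_of_le zero_le_one] at hx
        have hxy : y * x < 1 := by nlinarith [hx.1, hx.2, hy.1]
        simp only [← mul_pow]
        rw [tsum_geometric_of_lt_one (mul_nonneg hy.1.le hx.1) hxy, one_div, mul_comm]
    _ = ∑' n : ℕ, y ^ n / ((n:ℝ) + 1) := h3.tsum_eq.symm
    _ = _ := by
        congr 1
        funext n
        ring
end
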